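/- Consider a feedforward ReLU network f : ℝⁿ → ℝᵐ given by x₀ = x and x_{k+1} = ReLU(W_k x_k + b_k) for k = 0, …, K−1 (ReLU applied componentwise), with f(x) = x_K. Let S_in = {x : l₀ ≤ x ≤ u₀} (componentwise), and suppose vectors l_k, u_k (k = 1, …, K) and pre-activation bound vectors l'_k, u'_k (k = 0, …, K−1) are valid, i.e., for every x ∈ S_in the true activations satisfy l_k ≤ x_k ≤ u_k and l'_k ≤ W_k x_k + b_k ≤ u'_k. Let F : ℝⁿ × ℝᵐ → ℝ and let C be a set containing T(F, S_in, S_out) = {(x, y, z) : F(x, y) = z, x ∈ S_in, l_K ≤ y ≤ u_K}. If every tuple (x̂₀, …, x̂_K, z) satisfying (x̂₀, x̂_K, z) ∈ C, l_k ≤ x̂_k ≤ u_k for all k, and (x̂_{k+1})_i ∈ Relax(ReLU)((W_k x̂_k + b_k)_i, (l'_k)_i, (u'_k)_i) for all k, i, has z ≤ 0, then F(x, f(x)) ≤ 0 for all x ∈ S_in. -/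

import Mathlib

open Real Matrix

/-- The convex relaxation of the ReLU activation on `[l, u]`. -/
noncomputable def relaxReLU (t l u : ℝ) : Set ℝ :=
  if 0 ≤ l then {t}
  else if u ≤ 0 then {0}
  else {a : ℝ | a ≥ t ∧ a ≥ 0 ∧ a ≤ (u / (u - l)) * (t - l)}

/-- The activations of a feedforward ReLU network with layer widths `d`,
weights `W` and biases `b`: `net d W b x k` is the `k`-th layer activation
on input `x`. -/
noncomputable def net (d : ℕ → ℕ)
    (W : (k : ℕ) → Matrix (Fin (d (k + 1))) (Fin (d k)) ℝ)
    (b : (k : ℕ) → Fin (d (k + 1)) → ℝ)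
    (x : Fin (d 0) → ℝ) : (k : ℕ) → Fin (d k) → ℝ
  | 0 => x
  | k + 1 => fun i => max ((W k *ᵥ net d W b x k + b k) i) 0

-- The right-hand side is the chord of the convex function `max · 0` from `(l, 0)` to `(u, u)`.
theorem max_zero_le_chord {𝕜 : Type*} [Field 𝕜] [LinearOrder 𝕜] [IsStrictOrderedRing 𝕜]
    {t l u : 𝕜} (hl : l ≤ 0) (hu : 0 ≤ u) (hlu : l < u) (hlt : l ≤ t) (htu : t ≤ u) :
    max t 0 ≤ u / (u - l) * (t - l) := by
  have id_le_chord : t ≤ u / (u - l) * (t - l) := by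
    rw [div_mul_eq_mul_div, le_div_iff₀ (sub_pos.2 hlu)]
    have gap_nonneg : 0 ≤ -l * (u - t) := mul_nonneg (neg_nonneg.2 hl) (sub_nonneg.2 htu)
    linarith
  have chord_nonneg : 0 ≤ u / (u - l) * (t - l) :=
    mul_nonneg (div_nonneg hu (sub_nonneg.2 hlu.le)) (sub_nonneg.2 hlt)
  exact max_le id_le_chord chord_nonneg

theorem max_zero_mem_relaxReLU {t l u : ℝ} (hlt : l ≤ t) (htu : t ≤ u) :
    max t 0 ∈ relaxReLU t l u := by
  unfold relaxReLU
  split_ifs with hl hu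
  · exact max_eq_left (hl.trans hlt)
  · exact max_eq_right (htu.trans hu)
  · rw [not_le] at hl hu
    exact ⟨le_max_left t 0, le_max_right t 0,
      max_zero_le_chord hl.le hu.le (hl.trans hu) hlt htu⟩

/-- Feasibility of the layer values `xr 0, …, xr K` with objective value `z` for the relaxed
verification problem. Only the layers up to `K` are constrained, and the objective may take
values in any type, so that specifications with several outputs are covered. -/
structure RelaxedFeasible {α : Type*} (K : ℕ) {d : ℕ → ℕ}
    (W : (k : ℕ) → Matrix (Fin (d (k + 1))) (Fin (d k)) ℝ)
    (b : (k : ℕ) → Fin (d (k + 1)) → ℝ)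
    (l u : (k : ℕ) → Fin (d k) → ℝ) (l' u' : (k : ℕ) → Fin (d (k + 1)) → ℝ)
    (C : Set ((Fin (d 0) → ℝ) × (Fin (d K) → ℝ) × α))
    (xr : (k : ℕ) → Fin (d k) → ℝ) (z : α) : Prop where
  mem : (xr 0, xr K, z) ∈ C
  bounds : ∀ k, k ≤ K → ∀ i, l k i ≤ xr k i ∧ xr k i ≤ u k i
  relax : ∀ k, k < K → ∀ i,
    xr (k + 1) i ∈ relaxReLU ((W k *ᵥ xr k + b k) i) (l' k i) (u' k i)

section Network

variable {α : Type*} {K : ℕ} {d : ℕ → ℕ}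
  {W : (k : ℕ) → Matrix (Fin (d (k + 1))) (Fin (d k)) ℝ}
  {b : (k : ℕ) → Fin (d (k + 1)) → ℝ}
  {l u : (k : ℕ) → Fin (d k) → ℝ} {l' u' : (k : ℕ) → Fin (d (k + 1)) → ℝ}
  {C : Set ((Fin (d 0) → ℝ) × (Fin (d K) → ℝ) × α)}

theorem relaxedFeasible_net {x : Fin (d 0) → ℝ} {z : α}
    (hbounds : ∀ k, k ≤ K → ∀ i, l k i ≤ net d W b x k i ∧ net d W b x k i ≤ u k i)
    (hpre : ∀ k, k < K → ∀ i, l' k i ≤ (W k *ᵥ net d W b x k + b k) i ∧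
      (W k *ᵥ net d W b x k + b k) i ≤ u' k i)
    (hC : (x, net d W b x K, z) ∈ C) :
    RelaxedFeasible K W b l u l' u' C (net d W b x) z where
  mem := hC
  bounds := hbounds
  relax k hk i := max_zero_mem_relaxReLU (hpre k hk i).1 (hpre k hk i).2

theorem relaxed_network_verification_sound_general {Sin : Set (Fin (d 0) → ℝ)}
    (hbounds : ∀ x ∈ Sin, ∀ k, k ≤ K →
      ∀ i, l k i ≤ net d W b x k i ∧ net d W b x k i ≤ u k i)
    (hpre : ∀ x ∈ Sin, ∀ k, k < K →
      ∀ i, l' k i ≤ (W k *ᵥ net d W b x k + b k) i ∧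
        (W k *ᵥ net d W b x k + b k) i ≤ u' k i)
    {F : (Fin (d 0) → ℝ) × (Fin (d K) → ℝ) → α}
    (hTC : {p : (Fin (d 0) → ℝ) × (Fin (d K) → ℝ) × α |
        F (p.1, p.2.1) = p.2.2 ∧ p.1 ∈ Sin ∧
          ∀ i, l K i ≤ p.2.1 i ∧ p.2.1 i ≤ u K i} ⊆ C)
    {safe : Set α}
    (hfeas : ∀ xr z, RelaxedFeasible K W b l u l' u' C xr z → z ∈ safe) :
    ∀ x ∈ Sin, F (x, net d W b x K) ∈ safe := by
  intro x hx
  have graph_mem : (x, net d W b x K, F (x, net d W b x K)) ∈ C :=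
    hTC ⟨rfl, hx, hbounds x hx K le_rfl⟩
  exact hfeas _ _ (relaxedFeasible_net (hbounds x hx) (hpre x hx) graph_mem)

end Network

/-- Lemma 3.1 for feedforward ReLU networks: if every feasible point of the
relaxed problem (layerwise ReLU relaxations, intermediate bounds, and a convex
outer set `C ⊇ T(F, S_in, S_out)`) has objective `z ≤ 0`, then `F(x, f(x)) ≤ 0`
for every `x` in the box `S_in = {x : l₀ ≤ x ≤ u₀}`. -/
theorem relaxed_network_verification_sound
    (K : ℕ) (d : ℕ → ℕ)
    (W : (k : ℕ) → Matrix (Fin (d (k + 1))) (Fin (d k)) ℝ)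
    (b : (k : ℕ) → Fin (d (k + 1)) → ℝ)
    (l u : (k : ℕ) → Fin (d k) → ℝ)
    (l' u' : (k : ℕ) → Fin (d (k + 1)) → ℝ)
    (Sin : Set (Fin (d 0) → ℝ))
    (hSin : Sin = {x | ∀ i, l 0 i ≤ x i ∧ x i ≤ u 0 i})
    -- validity of the activation bounds
    (hbounds : ∀ x ∈ Sin, ∀ k, k ≤ K →
      ∀ i, l k i ≤ net d W b x k i ∧ net d W b x k i ≤ u k i)
    -- validity of the pre-activation bounds
    (hpre : ∀ x ∈ Sin, ∀ k, k < K →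
      ∀ i, l' k i ≤ (W k *ᵥ net d W b x k + b k) i ∧
        (W k *ᵥ net d W b x k + b k) i ≤ u' k i)
    (F : (Fin (d 0) → ℝ) × (Fin (d K) → ℝ) → ℝ)
    (C : Set ((Fin (d 0) → ℝ) × (Fin (d K) → ℝ) × ℝ))
    (hTC : {p : (Fin (d 0) → ℝ) × (Fin (d K) → ℝ) × ℝ |
        F (p.1, p.2.1) = p.2.2 ∧ p.1 ∈ Sin ∧
          ∀ i, l K i ≤ p.2.1 i ∧ p.2.1 i ≤ u K i} ⊆ C)
    -- every feasible point of the relaxed problem has objective `z ≤ 0`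
    (hfeas : ∀ (xr : (k : ℕ) → Fin (d k) → ℝ) (z : ℝ),
      (xr 0, xr K, z) ∈ C →
      (∀ k, k ≤ K → ∀ i, l k i ≤ xr k i ∧ xr k i ≤ u k i) →
      (∀ k, k < K → ∀ i,
        xr (k + 1) i ∈ relaxReLU ((W k *ᵥ xr k + b k) i) (l' k i) (u' k i)) →
      z ≤ 0) :
    ∀ x ∈ Sin, F (x, net d W b x K) ≤ 0 :=
  relaxed_network_verification_sound_general (safe := Set.Iic 0) hbounds hpre hTC
    fun xr z h => hfeas xr z h.mem h.bounds h.relax
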